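/- arXiv:0710.1902 — 2 statements merged into one kernel-verified Lean document; each statement's English description precedes it below -/
import Mathlib

section
/- Let f = x^n + x^{−n} for a positive integer n, and suppose g, h ∈ ℂ(x) satisfy g ∘ h = f. Then there exist a divisor d of n and a degree-one μ ∈ ℂ(x) such that either (1) g ∘ μ = x^{n/d} + x^{−n/d} and μ^{−1} ∘ h = x^d, or (2) g ∘ μ = β^n D_{n/d} and μ^{−1} ∘ h = (x/β)^d + (β/x)^d for some β ∈ ℂ with β^{2n} = 1. -/
open Polynomial

noncomputable def rcomp (f g : RatFunc ℂ) : RatFunc ℂ :=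
  RatFunc.eval (algebraMap ℂ (RatFunc ℂ)) g f

/-- A Laurent polynomial: a rational function whose only poles are `0` and `∞`. -/
def IsLaurent (f : RatFunc ℂ) : Prop :=
  ∃ (p : Polynomial ℂ) (k : ℕ),
    f = algebraMap (Polynomial ℂ) (RatFunc ℂ) p / RatFunc.X ^ k

/-- A degree-one (Möbius) rational function. -/
def IsMobius (μ : RatFunc ℂ) : Prop :=
  ∃ a b c d : ℂ, a * d - b * c ≠ 0 ∧
    μ = (RatFunc.C a * RatFunc.X + RatFunc.C b) / (RatFunc.C c * RatFunc.X + RatFunc.C d)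

open IntermediateField

noncomputable def compHom (h : RatFunc ℂ) (hh : Transcendental ℂ h) :
    RatFunc ℂ →ₐ[ℂ] RatFunc ℂ :=
  RatFunc.liftAlgHom (Polynomial.aeval h)
    (nonZeroDivisors_le_comap_nonZeroDivisors_of_injective _
      (transcendental_iff_injective.mp hh))

lemma compHom_apply (h : RatFunc ℂ) (hh : Transcendental ℂ h) (f : RatFunc ℂ) :
    compHom h hh f = rcomp f h := by
  rw [compHom, RatFunc.liftAlgHom_apply]; rfl

lemma algHom_ext_X (φ ψ : RatFunc ℂ →ₐ[ℂ] RatFunc ℂ) (H : φ RatFunc.X = ψ RatFunc.X) : φ = ψ := by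
  refine AlgHom.ext fun g => ?_
  have : ∀ p : ℂ[X], φ (algebraMap _ _ p) = ψ (algebraMap _ _ p) := by
    intro p
    rw [← RatFunc.aeval_X_left_eq_algebraMap, ← Polynomial.aeval_algHom_apply,
      ← Polynomial.aeval_algHom_apply, H]
  rw [← RatFunc.num_div_denom g, map_div₀, map_div₀, this, this]

lemma not_const {n : ℕ} (hn : 0 < n) :
    ¬ ∃ c, (RatFunc.X : RatFunc ℂ) ^ n + ((RatFunc.X : RatFunc ℂ) ^ n)⁻¹ = RatFunc.C c := by
  rintro ⟨c, hc⟩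
  have hX : (RatFunc.X : RatFunc ℂ) ≠ 0 := RatFunc.X_ne_zero
  have h1 : (RatFunc.X : RatFunc ℂ) ^ (2 * n) + 1 - RatFunc.C c * RatFunc.X ^ n = 0 := by
    rw [← hc]; field_simp; ring
  have h2 : (Polynomial.X ^ (2 * n) + 1 - Polynomial.C c * Polynomial.X ^ n : ℂ[X]) = 0 := by
    apply RatFunc.algebraMap_injective ℂ
    simpa [RatFunc.algebraMap_X, RatFunc.algebraMap_C] using h1
  have h3 := congrArg (fun p => Polynomial.eval 0 p) h2
  simp [hn.ne'] at h3

lemma const_of_rcomp (g h : RatFunc ℂ) (hh : ∃ c, h = RatFunc.C c) : ∃ c, rcomp g h = RatFunc.C c := by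
  obtain ⟨c, rfl⟩ := hh
  refine ⟨RatFunc.eval (RingHom.id ℂ) c g, ?_⟩
  have : ∀ p : ℂ[X], p.eval₂ (algebraMap ℂ (RatFunc ℂ)) (RatFunc.C c) = RatFunc.C (p.eval c) := by
    intro p
    rw [RatFunc.algebraMap_eq_C, Polynomial.eval₂_hom]
  simp only [rcomp, RatFunc.eval, this]
  simp [Polynomial.eval₂_id, map_div₀]

lemma mem_adjoin_iff_rcomp (h : RatFunc ℂ) (hh : Transcendental ℂ h) (z : RatFunc ℂ) :
    z ∈ ℂ⟮h⟯ ↔ ∃ a, rcomp a h = z := by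
  rw [mem_adjoin_simple_iff]
  constructor
  · rintro ⟨r, s, rfl⟩
    refine ⟨algebraMap _ _ r / algebraMap _ _ s, ?_⟩
    rw [← compHom_apply h hh, compHom, RatFunc.liftAlgHom_apply_div]
  · rintro ⟨a, rfl⟩
    exact ⟨a.num, a.denom, rfl⟩

lemma mobius_of (b : RatFunc ℂ) (hb : ℂ⟮b⟯ = ⊤) : IsMobius b := by
  have h1 := RatFunc.finrank_eq_max_natDegree b
  rw [hb, IntermediateField.finrank_top] at h1
  have hn : b.num.natDegree ≤ 1 := by omega
  have hd : b.denom.natDegree ≤ 1 := by omega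
  obtain ⟨p, q, hpq⟩ := Polynomial.exists_eq_X_add_C_of_natDegree_le_one hn
  obtain ⟨r, s, hrs⟩ := Polynomial.exists_eq_X_add_C_of_natDegree_le_one hd
  refine ⟨p, q, r, s, ?_, ?_⟩
  · intro hdet
    obtain ⟨u, v, huv⟩ := b.isCoprime_num_denom
    have hden := b.denom_ne_zero
    rw [hpq, hrs] at huv
    by_cases hr : r = 0
    · have hs : s ≠ 0 := by
        rintro rfl; apply hden; rw [hrs, hr]; simp
      have hp : p = 0 := by
        subst hr; simpa [hs] using hdet
      rw [hpq, hrs, hp, hr] at h1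
      simp at h1
    · have := congrArg (Polynomial.eval (-s/r)) huv
      have e1 : r * (-s/r) + s = 0 := by field_simp; ring
      have e2 : p * (-s/r) + q = 0 := by field_simp; linear_combination -hdet
      simp [e1, e2] at this
  · conv_lhs => rw [← RatFunc.num_div_denom b]
    rw [hpq, hrs]
    simp [RatFunc.algebraMap_X, RatFunc.algebraMap_C]

lemma assemble (g h f u T : RatFunc ℂ) (hh : Transcendental ℂ h) (hu : Transcendental ℂ u)
    (hgh : rcomp g h = f) (hT : rcomp T u = f) (h1 : u ∈ ℂ⟮h⟯) (h2 : h ∈ ℂ⟮u⟯) :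
    ∃ μ ν : RatFunc ℂ, IsMobius μ ∧
      rcomp μ ν = RatFunc.X ∧ rcomp ν μ = RatFunc.X ∧ rcomp g μ = T ∧ rcomp ν h = u := by
  obtain ⟨ν, hν⟩ := (mem_adjoin_iff_rcomp h hh u).1 h1
  obtain ⟨μ, hμ⟩ := (mem_adjoin_iff_rcomp u hu h).1 h2
  have tν : Transcendental ℂ ν := RatFunc.transcendental_of_ne_C _ fun ⟨c, hc⟩ => by
    rw [hc, rcomp, RatFunc.eval_C] at hν
    exact hu (hν ▸ isAlgebraic_algebraMap c)
  have tμ : Transcendental ℂ μ := RatFunc.transcendental_of_ne_C _ fun ⟨c, hc⟩ => by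
    rw [hc, rcomp, RatFunc.eval_C] at hμ
    exact hh (hμ ▸ isAlgebraic_algebraMap c)
  have X1 : ∀ k : RatFunc ℂ, rcomp RatFunc.X k = k := fun k => by simp [rcomp]
  -- (a ∘ μ) ∘ u = a ∘ h
  have c1 : (compHom u hu).comp (compHom μ tμ) = compHom h hh := by
    apply algHom_ext_X
    simp only [AlgHom.comp_apply, compHom_apply, X1, hμ]
  have c2 : (compHom h hh).comp (compHom ν tν) = compHom u hu := by
    apply algHom_ext_X
    simp only [AlgHom.comp_apply, compHom_apply, X1, hν]
  have e1 : ∀ a, rcomp (rcomp a μ) u = rcomp a h := fun a => by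
    have := DFunLike.congr_fun c1 a
    simpa only [AlgHom.comp_apply, compHom_apply] using this
  have e2 : ∀ a, rcomp (rcomp a ν) h = rcomp a u := fun a => by
    have := DFunLike.congr_fun c2 a
    simpa only [AlgHom.comp_apply, compHom_apply] using this
  have iu : ∀ a b, rcomp a u = rcomp b u → a = b := fun a b hab => by
    rw [← compHom_apply u hu, ← compHom_apply u hu] at hab
    exact (compHom u hu).toRingHom.injective hab
  have ih : ∀ a b, rcomp a h = rcomp b h → a = b := fun a b hab => by
    rw [← compHom_apply h hh, ← compHom_apply h hh] at hab
    exact (compHom h hh).toRingHom.injective hab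
  have k1 : rcomp μ ν = RatFunc.X := ih _ _ (by rw [e2, hμ, X1])
  have k2 : rcomp ν μ = RatFunc.X := iu _ _ (by rw [e1, hν, X1])
  refine ⟨μ, ν, mobius_of μ ?_, k1, k2, iu _ _ (by rw [e1, hgh, hT]), hν⟩
  rw [_root_.eq_top_iff, ← RatFunc.adjoin_X, adjoin_simple_le_iff, mem_adjoin_iff_rcomp μ tμ]
  exact ⟨ν, k2⟩

lemma root_const {n : ℕ} (hn : 0 < n) (w : RatFunc ℂ) (hw : w ^ n = 1) :
    ∃ ζ : ℂ, ζ ^ n = 1 ∧ w = RatFunc.C ζ := by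
  have : NeZero n := ⟨hn.ne'⟩
  have hp := Complex.isPrimitiveRoot_exp n hn.ne'
  have hp' := hp.map_of_injective (f := (RatFunc.C : ℂ →+* RatFunc ℂ)) RatFunc.C_injective
  obtain ⟨i, _, hi⟩ := hp'.eq_pow_of_pow_eq_one hw
  refine ⟨Complex.exp (2 * Real.pi * Complex.I / n) ^ i, ?_, ?_⟩
  rotate_left
  · rw [map_pow]; exact hi.symm
  · rw [← pow_mul, mul_comm i n, pow_mul, hp.pow_eq_one, one_pow]

lemma galois_fix {n : ℕ} (hn : 0 < n) (K : IntermediateField ℂ (RatFunc ℂ))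
    (hf : (RatFunc.X : RatFunc ℂ) ^ n + ((RatFunc.X : RatFunc ℂ) ^ n)⁻¹ ∈ K) (z : RatFunc ℂ)
    (hz : ∀ σ : RatFunc ℂ ≃ₐ[ℂ] RatFunc ℂ, (∀ k ∈ K, σ k = k) → σ z = z) : z ∈ K := by
  have hX : (RatFunc.X : RatFunc ℂ) ≠ 0 := RatFunc.X_ne_zero
  let P : Polynomial K := Polynomial.X ^ (2 * n) - Polynomial.C ⟨_, hf⟩ * Polynomial.X ^ n + 1
  have hP : P.map (algebraMap K (RatFunc ℂ)) =
      (Polynomial.X ^ n - Polynomial.C (RatFunc.X ^ n)) *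
      (Polynomial.X ^ n - Polynomial.C (((RatFunc.X : RatFunc ℂ) ^ n)⁻¹)) := by
    have e : (Polynomial.C ((RatFunc.X : RatFunc ℂ) ^ n)) *
      (Polynomial.C (((RatFunc.X : RatFunc ℂ) ^ n)⁻¹)) = 1 := by
      rw [← Polynomial.C_mul, mul_inv_cancel₀ (pow_ne_zero _ hX), Polynomial.C_1]
    simp only [P, Polynomial.map_add, Polynomial.map_sub, Polynomial.map_mul, Polynomial.map_pow,
      Polynomial.map_X, Polynomial.map_C, Polynomial.map_one, IntermediateField.algebraMap_apply,
      Polynomial.C_add]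
    linear_combination -e
  have hp' := (Complex.isPrimitiveRoot_exp n hn.ne').map_of_injective
    (f := (RatFunc.C : ℂ →+* RatFunc ℂ)) RatFunc.C_injective
  have hsp : (P.map (algebraMap K (RatFunc ℂ))).Splits := by
    rw [hP]
    refine Polynomial.Splits.mul ?_ ?_
    · exact X_pow_sub_C_splits_of_isPrimitiveRoot hp' rfl
    · exact X_pow_sub_C_splits_of_isPrimitiveRoot hp' (by rw [inv_pow])
  have hP0 : P ≠ 0 := by
    intro h0
    rw [h0, Polynomial.map_zero] at hP
    have := congrArg (Polynomial.eval 0) hP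
    simp [hn.ne'] at this
    exact hX this
  have : P.IsSplittingField K (RatFunc ℂ) := by
    refine (isSplittingField_iff_intermediateField).2 ⟨hsp, ?_⟩
    rw [_root_.eq_top_iff, ← RatFunc.IntermediateField.adjoin_X K]
    refine adjoin.mono _ _ _ ?_
    rw [Set.singleton_subset_iff, Polynomial.mem_rootSet]
    refine ⟨hP0, ?_⟩
    rw [← Polynomial.eval_map_algebraMap, hP]
    simp
  have : FiniteDimensional K (RatFunc ℂ) := Polynomial.IsSplittingField.finiteDimensional _ P
  have : Normal K (RatFunc ℂ) := Normal.of_isSplittingField P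
  have : IsGalois K (RatFunc ℂ) := ⟨⟩
  have := (IsGalois.mem_bot_iff_fixed (F := K) (E := RatFunc ℂ) z).2 (fun σ =>
    hz (σ.restrictScalars ℂ) (fun k hk => σ.commutes ⟨k, hk⟩))
  obtain ⟨k, hk⟩ := this
  rw [← hk]
  exact k.2

lemma galois_fix' {n : ℕ} (hn : 0 < n) (h : RatFunc ℂ)
    (hf : (RatFunc.X : RatFunc ℂ) ^ n + ((RatFunc.X : RatFunc ℂ) ^ n)⁻¹ ∈ ℂ⟮h⟯) (z : RatFunc ℂ)
    (hz : ∀ σ : RatFunc ℂ ≃ₐ[ℂ] RatFunc ℂ, σ h = h → σ z = z) : z ∈ ℂ⟮h⟯ :=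
  galois_fix hn _ hf z fun σ hσ => hz σ (hσ h (mem_adjoin_simple_self ℂ h))

lemma sigma_eq (σ τ : RatFunc ℂ ≃ₐ[ℂ] RatFunc ℂ) (H : σ RatFunc.X = τ RatFunc.X)
    (z : RatFunc ℂ) : σ z = τ z :=
  DFunLike.congr_fun (algHom_ext_X σ.toAlgHom τ.toAlgHom H) z

/-- If `β^2 = γ` and `y^d + γ^d y^{-d}` is preserved, `y` is a rotation or reflection of `X`. -/
lemma two_cases {d : ℕ} (hd : 0 < d) (γ : ℂ) (hγ : γ ≠ 0) (y : RatFunc ℂ) (hy : y ≠ 0)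
    (H : y ^ d + (RatFunc.C γ) ^ d * (y ^ d)⁻¹ =
      RatFunc.X ^ d + (RatFunc.C γ) ^ d * ((RatFunc.X : RatFunc ℂ) ^ d)⁻¹) :
    ∃ ζ : ℂ, ζ ^ d = 1 ∧ (y = RatFunc.C ζ * RatFunc.X ∨
      y = RatFunc.C ζ * RatFunc.C γ / RatFunc.X) := by
  have hX : (RatFunc.X : RatFunc ℂ) ≠ 0 := RatFunc.X_ne_zero
  have hc : (RatFunc.C γ : RatFunc ℂ) ≠ 0 := by simpa using hγ
  have hyd := pow_ne_zero d hy
  have hXd := pow_ne_zero d hX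
  have key : (y ^ d - RatFunc.X ^ d) * (y ^ d * RatFunc.X ^ d - RatFunc.C γ ^ d) = 0 := by
    field_simp at H
    linear_combination H
  rcases mul_eq_zero.1 key with h | h
  · obtain ⟨ζ, h1, h2⟩ := root_const hd (y / RatFunc.X) (by
      rw [div_pow, sub_eq_zero.1 h, div_self hXd])
    exact ⟨ζ, h1, Or.inl (by rw [← h2]; field_simp)⟩
  · obtain ⟨ζ, h1, h2⟩ := root_const hd (y * RatFunc.X / RatFunc.C γ) (by
      rw [div_pow, mul_pow, sub_eq_zero.1 h, div_self (pow_ne_zero d hc)])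
    exact ⟨ζ, h1, Or.inr (by rw [← h2]; field_simp)⟩

/-- The rotations fixing `h`. -/
def rotGroup (h : RatFunc ℂ) : Subgroup ℂˣ where
  carrier := {ζ | ∃ σ : RatFunc ℂ ≃ₐ[ℂ] RatFunc ℂ, σ h = h ∧
    σ RatFunc.X = RatFunc.C (ζ : ℂ) * RatFunc.X}
  one_mem' := ⟨AlgEquiv.refl, rfl, by simp⟩
  mul_mem' := by
    rintro a b ⟨σ, h1, h2⟩ ⟨τ, h3, h4⟩
    refine ⟨σ * τ, by rw [AlgEquiv.mul_apply, h3, h1], ?_⟩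
    rw [AlgEquiv.mul_apply, h4, map_mul, h2, ← RatFunc.algebraMap_eq_C, σ.commutes]
    simp only [Units.val_mul, map_mul]; ring
  inv_mem' := by
    rintro a ⟨σ, h1, h2⟩
    refine ⟨σ⁻¹, ?_, ?_⟩
    · exact σ.symm_apply_eq.2 h1.symm
    · refine σ.symm_apply_eq.2 ?_
      rw [map_mul, h2, ← RatFunc.algebraMap_eq_C, σ.commutes, ← mul_assoc, ← map_mul]
      simp

lemma exists_d {n : ℕ} (hn : 0 < n) (A : Subgroup ℂˣ) (hA : ∀ a ∈ A, a ^ n = 1) :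
    ∃ d, d ∣ n ∧ 0 < d ∧ ∀ a : ℂˣ, a ∈ A ↔ a ^ d = 1 := by
  have : NeZero n := ⟨hn.ne'⟩
  have hle : A ≤ rootsOfUnity n ℂ := fun a ha => hA a ha
  have hcard : Nat.card (rootsOfUnity n ℂ) = n := by
    rw [Complex.card_rootsOfUnity]
  have : Finite A := Finite.of_injective _ (Subgroup.inclusion_injective hle)
  have hdvd : Nat.card A ∣ n := hcard ▸ Subgroup.card_dvd_of_le hle
  have : NeZero (Nat.card A) := ⟨Nat.card_pos.ne'⟩
  have hle2 : A ≤ rootsOfUnity (Nat.card A) ℂ := fun a ha => by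
    have := pow_card_eq_one' (x := (⟨a, ha⟩ : A))
    exact congrArg Subtype.val this
  have heq : A = rootsOfUnity (Nat.card A) ℂ := by
    apply Subgroup.eq_of_le_of_card_ge hle2
    rw [Complex.card_rootsOfUnity]
  refine ⟨Nat.card A, hdvd, Nat.card_pos, fun a => ?_⟩
  rw [← mem_rootsOfUnity, ← heq]

lemma rcomp_map (σ : RatFunc ℂ ≃ₐ[ℂ] RatFunc ℂ) (g h : RatFunc ℂ) :
    σ (rcomp g h) = rcomp g (σ h) := by
  have : ∀ p : ℂ[X], σ (p.eval₂ (algebraMap ℂ (RatFunc ℂ)) h) =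
      p.eval₂ (algebraMap ℂ (RatFunc ℂ)) (σ h) := fun p =>
    (Polynomial.aeval_algHom_apply σ.toAlgHom h p).symm
  rw [rcomp, rcomp, RatFunc.eval, RatFunc.eval, map_div₀, this, this]

lemma sigma_C (σ : RatFunc ℂ ≃ₐ[ℂ] RatFunc ℂ) (c : ℂ) : σ (RatFunc.C c) = RatFunc.C c := by
  rw [← RatFunc.algebraMap_eq_C, σ.commutes]

lemma dickson_aeval (m : ℕ) (x : RatFunc ℂ) (hx : x ≠ 0) :
    Polynomial.aeval (x + x⁻¹) (Polynomial.dickson 1 (1 : ℂ) m) = x ^ m + (x ^ m)⁻¹ := by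
  rw [← Polynomial.eval_map_algebraMap, Polynomial.map_dickson, map_one,
    Polynomial.dickson_one_one_eval_add_inv x x⁻¹ (mul_inv_cancel₀ hx), inv_pow]

theorem decompositions_of_x_pow_add_inv (n : ℕ) (hn : 0 < n) (g h : RatFunc ℂ)
    (hgh : rcomp g h = (RatFunc.X : RatFunc ℂ) ^ n + ((RatFunc.X : RatFunc ℂ) ^ n)⁻¹) :
    ∃ d : ℕ, d ∣ n ∧ ∃ μ ν : RatFunc ℂ, IsMobius μ ∧
      rcomp μ ν = RatFunc.X ∧ rcomp ν μ = RatFunc.X ∧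
      ((rcomp g μ = (RatFunc.X : RatFunc ℂ) ^ (n / d) + ((RatFunc.X : RatFunc ℂ) ^ (n / d))⁻¹ ∧
          rcomp ν h = RatFunc.X ^ d) ∨
       (∃ β : ℂ, β ^ (2 * n) = 1 ∧
          rcomp g μ = RatFunc.C (β ^ n) *
            algebraMap (Polynomial ℂ) (RatFunc ℂ) (Polynomial.dickson 1 (1 : ℂ) (n / d)) ∧
          rcomp ν h = (RatFunc.X / RatFunc.C β) ^ d + (RatFunc.C β / RatFunc.X) ^ d)) := by
  
  have hX : (RatFunc.X : RatFunc ℂ) ≠ 0 := RatFunc.X_ne_zero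
  have th : Transcendental ℂ h := RatFunc.transcendental_of_ne_C _ fun hc =>
    not_const hn (hgh ▸ const_of_rcomp g h hc)
  have hf : (RatFunc.X : RatFunc ℂ) ^ n + ((RatFunc.X : RatFunc ℂ) ^ n)⁻¹ ∈ ℂ⟮h⟯ :=
    (mem_adjoin_iff_rcomp h th _).2 ⟨g, hgh⟩
  have hσ0 : ∀ σ : RatFunc ℂ ≃ₐ[ℂ] RatFunc ℂ, σ RatFunc.X ≠ 0 := fun σ =>
    (map_ne_zero σ).2 hX
  have hdich : ∀ σ : RatFunc ℂ ≃ₐ[ℂ] RatFunc ℂ, σ h = h → ∃ ζ : ℂ, ζ ^ n = 1 ∧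
      (σ RatFunc.X = RatFunc.C ζ * RatFunc.X ∨ σ RatFunc.X = RatFunc.C ζ / RatFunc.X) := by
    intro σ hσ
    have e : σ (rcomp g h) = rcomp g h := by rw [rcomp_map, hσ]
    rw [hgh, map_add, map_inv₀, map_pow] at e
    simpa using two_cases hn 1 one_ne_zero (σ RatFunc.X) (hσ0 σ) (by simpa using e)
  obtain ⟨d, hdn, hd, hA⟩ := exists_d hn (rotGroup h) (by
    rintro a ⟨σ, h1, h2⟩
    have e : σ (rcomp g h) = rcomp g h := by rw [rcomp_map, h1]
    obtain ⟨ζ, hζ, h3 | h3⟩ := hdich σ h1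
    · rw [h3] at h2
      have := RatFunc.C_injective (mul_right_cancel₀ hX h2)
      ext; rw [Units.val_pow_eq_pow_val, ← this, hζ]; rfl
    · exfalso
      rw [h3, div_eq_iff hX] at h2
      have h4 : (Polynomial.C ζ : ℂ[X]) = Polynomial.C (a : ℂ) * Polynomial.X * Polynomial.X := by
        apply RatFunc.algebraMap_injective ℂ
        simpa [RatFunc.algebraMap_X, RatFunc.algebraMap_C] using h2
      have h5 := congrArg (Polynomial.eval 0) h4
      simp at h5
      rw [h5] at hζ
      simp [hn.ne'] at hζ)
  have hrot : ∀ ζ : ℂ, ζ ^ d = 1 → ∃ σ : RatFunc ℂ ≃ₐ[ℂ] RatFunc ℂ, σ h = h ∧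
      σ RatFunc.X = RatFunc.C ζ * RatFunc.X := by
    intro ζ hζ
    have hζ0 : ζ ≠ 0 := by rintro rfl; simp [hd.ne'] at hζ
    exact (hA (Units.mk0 ζ hζ0)).2 (by ext; simpa using hζ)
  have hrot' : ∀ ζ : ℂ, ∀ σ : RatFunc ℂ ≃ₐ[ℂ] RatFunc ℂ, ζ ≠ 0 → σ h = h →
      σ RatFunc.X = RatFunc.C ζ * RatFunc.X → ζ ^ d = 1 := by
    intro ζ σ hζ0 h1 h2
    have := (hA (Units.mk0 ζ hζ0)).1 ⟨σ, h1, h2⟩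
    simpa using congrArg Units.val this
  have h0 : ∀ ζ : ℂ, ζ ^ n = 1 → ζ ≠ 0 := by
    rintro ζ hζ rfl; simp [hn.ne'] at hζ
  have hnd : d * (n / d) = n := Nat.mul_div_cancel' hdn
  refine ⟨d, hdn, ?_⟩
  by_cases hrefl : ∃ τ : RatFunc ℂ ≃ₐ[ℂ] RatFunc ℂ, τ h = h ∧ ∃ γ : ℂ, γ ^ n = 1 ∧
      τ RatFunc.X = RatFunc.C γ / RatFunc.X
  · obtain ⟨τ, hτ, γ, hγ, hτX⟩ := hrefl
    obtain ⟨β, hβ⟩ := IsAlgClosed.exists_pow_nat_eq γ (n := 2) (by norm_num)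
    have hγ0 := h0 γ hγ
    have hβ0 : β ≠ 0 := by rintro rfl; simp at hβ; exact hγ0 hβ.symm
    have hβn : β ^ (2 * n) = 1 := by rw [pow_mul, hβ, hγ]
    have hCβ : (RatFunc.C β : RatFunc ℂ) ≠ 0 := by simpa using hβ0
    have hCγ : (RatFunc.C γ : RatFunc ℂ) ≠ 0 := by simpa using hγ0
    have hCβγ : (RatFunc.C γ : RatFunc ℂ) = RatFunc.C β ^ 2 := by rw [← map_pow, hβ]
    set u : RatFunc ℂ := (RatFunc.X / RatFunc.C β) ^ d + (RatFunc.C β / RatFunc.X) ^ d with hu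
    have hval : ∀ y : RatFunc ℂ, y ≠ 0 → (y / RatFunc.C β) ^ d + (RatFunc.C β / y) ^ d =
        (RatFunc.C β ^ d)⁻¹ * (y ^ d + (RatFunc.C γ) ^ d * (y ^ d)⁻¹) := by
      intro y hy
      rw [hCβγ, div_pow, div_pow]
      field_simp
      ring
    have hσu : ∀ σ : RatFunc ℂ ≃ₐ[ℂ] RatFunc ℂ, σ u =
        (RatFunc.C β ^ d)⁻¹ * ((σ RatFunc.X) ^ d + (RatFunc.C γ) ^ d * ((σ RatFunc.X) ^ d)⁻¹) := by
      intro σ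
      rw [hu, map_add, map_pow, map_pow, map_div₀, map_div₀, sigma_C, hval _ (hσ0 σ)]
    have hu' : u = (RatFunc.C β ^ d)⁻¹ *
        (RatFunc.X ^ d + (RatFunc.C γ) ^ d * ((RatFunc.X : RatFunc ℂ) ^ d)⁻¹) := hval _ hX
    have hdick : RatFunc.C (β ^ n) * Polynomial.aeval u (Polynomial.dickson 1 (1 : ℂ) (n / d)) =
        (RatFunc.X : RatFunc ℂ) ^ n + ((RatFunc.X : RatFunc ℂ) ^ n)⁻¹ := by
      have e := dickson_aeval (n / d) ((RatFunc.X / RatFunc.C β) ^ d)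
        (pow_ne_zero _ (div_ne_zero hX hCβ))
      have e2 : u = (RatFunc.X / RatFunc.C β) ^ d + ((RatFunc.X / RatFunc.C β) ^ d)⁻¹ := by
        rw [hu, ← inv_pow, inv_div]
      rw [e2, e, ← pow_mul, hnd, map_pow]
      have e3 : (RatFunc.C β : RatFunc ℂ) ^ n * RatFunc.C β ^ n = 1 := by
        rw [← pow_add, ← two_mul, ← map_pow, hβn, map_one]
      rw [div_pow, inv_div, mul_add, mul_div_cancel₀ _ (pow_ne_zero n hCβ), ← mul_div_assoc, e3,
        one_div]
    have tu : Transcendental ℂ u := RatFunc.transcendental_of_ne_C _ fun ⟨c, hc⟩ => by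
      refine not_const hn ⟨β ^ n * (Polynomial.dickson 1 (1 : ℂ) (n / d)).eval c, ?_⟩
      rw [← hdick, hc, ← RatFunc.algebraMap_eq_C, Polynomial.aeval_algebraMap_apply, map_mul]
      simp
    have hT : rcomp (RatFunc.C (β ^ n) * algebraMap (Polynomial ℂ) (RatFunc ℂ)
        (Polynomial.dickson 1 (1 : ℂ) (n / d))) u =
        (RatFunc.X : RatFunc ℂ) ^ n + ((RatFunc.X : RatFunc ℂ) ^ n)⁻¹ := by
      rw [← compHom_apply u tu, map_mul, compHom_apply, compHom_apply, ← hdick]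
      rw [rcomp, RatFunc.eval_C, rcomp, RatFunc.eval_algebraMap]
      rfl
    have m1 : u ∈ ℂ⟮h⟯ := by
      refine galois_fix' hn h hf u fun σ hσ => ?_
      rw [hσu, hu']
      congr 1
      obtain ⟨ζ, hζ, hr | hr⟩ := hdich σ hσ
      · rw [hr, mul_pow, ← map_pow, hrot' ζ σ (h0 ζ hζ) hσ hr, map_one, one_mul]
      · have hCζ : (RatFunc.C ζ : RatFunc ℂ) ≠ 0 := by simpa using h0 ζ hζ
        have e : (σ * τ) RatFunc.X = RatFunc.C (γ / ζ) * RatFunc.X := by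
          rw [AlgEquiv.mul_apply, hτX, map_div₀, sigma_C, hr, map_div₀]
          field_simp
        have e2 := hrot' (γ / ζ) (σ * τ) (div_ne_zero hγ0 (h0 ζ hζ))
          (by rw [AlgEquiv.mul_apply, hτ, hσ]) e
        rw [div_pow, div_eq_one_iff_eq (pow_ne_zero _ (h0 ζ hζ))] at e2
        rw [hr, div_pow, ← map_pow, ← map_pow, ← e2, map_pow, inv_div,
          mul_div_cancel₀ _ (pow_ne_zero d hCγ), add_comm, div_eq_mul_inv]
    have m2 : h ∈ ℂ⟮u⟯ := by
      refine galois_fix' hn u ((mem_adjoin_iff_rcomp u tu _).2 ⟨_, hT⟩) h fun σ hσ => ?_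
      rw [hσu, hu'] at hσ
      have hσ' := mul_left_cancel₀ (inv_ne_zero (pow_ne_zero d hCβ)) hσ
      obtain ⟨ζ, hζ, hr | hr⟩ := two_cases hd γ hγ0 _ (hσ0 σ) hσ'
      · obtain ⟨ρ, h1, h2⟩ := hrot ζ hζ
        rw [sigma_eq σ ρ (by rw [hr, h2]), h1]
      · have hζ' : ζ⁻¹ ^ d = 1 := by rw [inv_pow, hζ, inv_one]
        have hζ0 : ζ ≠ 0 := by rintro rfl; simp [hd.ne'] at hζ
        have hCζ : (RatFunc.C ζ : RatFunc ℂ) ≠ 0 := by simpa using hζ0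
        obtain ⟨ρ, h1, h2⟩ := hrot ζ⁻¹ hζ'
        rw [sigma_eq σ (ρ * τ) (by
          rw [hr, AlgEquiv.mul_apply, hτX, map_div₀, sigma_C, h2, map_inv₀]; field_simp),
          AlgEquiv.mul_apply, hτ, h1]
    obtain ⟨μ, ν, a1, a2, a3, a4, a5⟩ := assemble g h _ u _ th tu hgh hT m1 m2
    exact ⟨μ, ν, a1, a2, a3, Or.inr ⟨β, hβn, a4, a5⟩⟩
  · have hXn : (RatFunc.X : RatFunc ℂ) ^ n = (RatFunc.X ^ d) ^ (n / d) := by rw [← pow_mul, hnd]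
    have tu : Transcendental ℂ ((RatFunc.X : RatFunc ℂ) ^ d) :=
      RatFunc.transcendental_of_ne_C _ fun ⟨c, hc⟩ => by
        refine not_const hn ⟨c ^ (n / d) + (c ^ (n / d))⁻¹, ?_⟩
        rw [hXn, hc]
        simp
    have hT : rcomp ((RatFunc.X : RatFunc ℂ) ^ (n / d) + ((RatFunc.X : RatFunc ℂ) ^ (n / d))⁻¹)
        (RatFunc.X ^ d) =
        (RatFunc.X : RatFunc ℂ) ^ n + ((RatFunc.X : RatFunc ℂ) ^ n)⁻¹ := by
      rw [← compHom_apply _ tu, map_add, map_inv₀, map_pow, compHom_apply, hXn]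
      simp [rcomp]
    have m1 : (RatFunc.X : RatFunc ℂ) ^ d ∈ ℂ⟮h⟯ := by
      refine galois_fix' hn h hf _ fun σ hσ => ?_
      obtain ⟨ζ, hζ, hr | hr⟩ := hdich σ hσ
      · rw [map_pow, hr, mul_pow, ← map_pow, hrot' ζ σ (h0 ζ hζ) hσ hr, map_one, one_mul]
      · exact absurd ⟨σ, hσ, ζ, hζ, hr⟩ hrefl
    have m2 : h ∈ ℂ⟮(RatFunc.X : RatFunc ℂ) ^ d⟯ := by
      refine galois_fix' hn _ ((mem_adjoin_iff_rcomp _ tu _).2 ⟨_, hT⟩) h fun σ hσ => ?_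
      obtain ⟨ζ, hζ, hr⟩ := root_const hd (σ RatFunc.X / RatFunc.X) (by
        rw [div_pow, ← map_pow, hσ, div_self (pow_ne_zero d hX)])
      obtain ⟨ρ, h1, h2⟩ := hrot ζ hζ
      rw [sigma_eq σ ρ (by rw [h2, ← hr, div_mul_cancel₀ _ hX]), h1]
    obtain ⟨μ, ν, a1, a2, a3, a4, a5⟩ := assemble g h _ _ _ th tu hgh hT m1 m2
    exact ⟨μ, ν, a1, a2, a3, Or.inl ⟨a4, a5⟩⟩
end

section
/- Let σ be the automorphism of ℂ(x) with σ(x) = 1/x, and let h ∈ ℂ(x) satisfy h(1/x) = −h(x) and h(1) = h(−1) = 0, with h having no poles outside {0, ∞}. Then h(x)/(x − 1/x) = q(x + 1/x) for some polynomial q ∈ ℂ[x]. -/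
open Polynomial

theorem pow_sub_inv_aux {K : Type*} [Field K] [Algebra ℂ K] (y : K) (hy : y ≠ 0) (n : ℕ) :
    ∃ q : Polynomial ℂ, y ^ n - y⁻¹ ^ n = (y - y⁻¹) * aeval (y + y⁻¹) q := by
  induction n using Nat.twoStepInduction with
  | zero => exact ⟨0, by simp⟩
  | one => exact ⟨1, by simp⟩
  | more n ih1 ih2 =>
    obtain ⟨a, ha⟩ := ih1
    obtain ⟨b, hb⟩ := ih2
    refine ⟨Polynomial.X * b - a, ?_⟩
    have hyy : y * y⁻¹ = 1 := mul_inv_cancel₀ hy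
    rw [map_sub, map_mul, aeval_X]
    linear_combination (y + y⁻¹) * hb - ha - (y ^ n - y⁻¹ ^ n) * hyy

theorem monomial_aux {K : Type*} [Field K] [Algebra ℂ K] (y : K) (hy : y ≠ 0) (n k : ℕ) :
    ∃ q : Polynomial ℂ, y ^ n * y⁻¹ ^ k - y⁻¹ ^ n * y ^ k
      = (y - y⁻¹) * aeval (y + y⁻¹) q := by
  have hyy (m : ℕ) : y ^ m * y⁻¹ ^ m = 1 := by
    rw [← mul_pow, mul_inv_cancel₀ hy, one_pow]
  rcases le_total k n with h | h
  · obtain ⟨m, rfl⟩ := Nat.exists_eq_add_of_le h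
    obtain ⟨q, hq⟩ := pow_sub_inv_aux y hy m
    refine ⟨q, ?_⟩
    rw [pow_add, pow_add]
    linear_combination hq + (y ^ m - y⁻¹ ^ m) * hyy k
  · obtain ⟨m, rfl⟩ := Nat.exists_eq_add_of_le h
    obtain ⟨q, hq⟩ := pow_sub_inv_aux y hy m
    refine ⟨-q, ?_⟩
    rw [pow_add, pow_add, map_neg]
    linear_combination -hq - (y ^ m - y⁻¹ ^ m) * hyy n

theorem poly_aux {K : Type*} [Field K] [Algebra ℂ K] (y : K) (hy : y ≠ 0) (k : ℕ)
    (p : Polynomial ℂ) :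
    ∃ q : Polynomial ℂ, aeval y p * y⁻¹ ^ k - aeval y⁻¹ p * y ^ k
      = (y - y⁻¹) * aeval (y + y⁻¹) q := by
  induction p using Polynomial.induction_on' with
  | add f g hf hg =>
    obtain ⟨a, ha⟩ := hf
    obtain ⟨b, hb⟩ := hg
    refine ⟨a + b, ?_⟩
    simp only [map_add]
    linear_combination ha + hb
  | monomial n c =>
    obtain ⟨q, hq⟩ := monomial_aux y hy n k
    refine ⟨Polynomial.C c * q, ?_⟩
    simp only [aeval_monomial, map_mul, aeval_C]
    linear_combination algebraMap ℂ K c * hq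

theorem rcomp_aux (p : Polynomial ℂ) (k : ℕ) :
    rcomp (algebraMap (Polynomial ℂ) (RatFunc ℂ) p / RatFunc.X ^ k) (RatFunc.X)⁻¹
      = aeval (RatFunc.X : RatFunc ℂ)⁻¹ p * RatFunc.X ^ k := by
  have hX : (RatFunc.X : RatFunc ℂ) ≠ 0 := RatFunc.X_ne_zero
  set h := algebraMap (Polynomial ℂ) (RatFunc ℂ) p / RatFunc.X ^ k with hh
  have hk : (Polynomial.X : Polynomial ℂ) ^ k ≠ 0 := pow_ne_zero _ Polynomial.X_ne_zero
  have hh' : h = algebraMap (Polynomial ℂ) (RatFunc ℂ) p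
      / algebraMap (Polynomial ℂ) (RatFunc ℂ) (Polynomial.X ^ k) := by
    rw [hh, map_pow, RatFunc.algebraMap_X]
  have hd : h.denom ∣ Polynomial.X ^ k := (RatFunc.denom_dvd hk).2 ⟨p, hh'⟩
  obtain ⟨e, he⟩ := hd
  have hek : aeval (RatFunc.X : RatFunc ℂ)⁻¹ h.denom * aeval (RatFunc.X : RatFunc ℂ)⁻¹ e
      = (RatFunc.X : RatFunc ℂ)⁻¹ ^ k := by
    rw [← map_mul, ← he, map_pow, aeval_X]
  have hne : aeval (RatFunc.X : RatFunc ℂ)⁻¹ h.denom ≠ 0 := by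
    intro h0
    rw [h0, zero_mul] at hek
    exact pow_ne_zero k (inv_ne_zero hX) hek.symm
  have hp : h.num * Polynomial.X ^ k = p * h.denom := by
    apply RatFunc.algebraMap_injective ℂ
    have hn := RatFunc.num_div_denom h
    have hdn : algebraMap (Polynomial ℂ) (RatFunc ℂ) h.denom ≠ 0 :=
      RatFunc.algebraMap_ne_zero h.denom_ne_zero
    have hkn := RatFunc.algebraMap_ne_zero hk
    rw [map_mul, map_mul]
    rw [← div_eq_div_iff hdn hkn, hn, hh']
  have hp2 := congrArg (aeval (RatFunc.X : RatFunc ℂ)⁻¹) hp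
  rw [map_mul, map_mul, map_pow, aeval_X] at hp2
  change aeval (RatFunc.X : RatFunc ℂ)⁻¹ h.num / aeval (RatFunc.X : RatFunc ℂ)⁻¹ h.denom = _
  rw [div_eq_iff hne]
  have hyy : (RatFunc.X : RatFunc ℂ)⁻¹ ^ k * RatFunc.X ^ k = 1 := by
    rw [← mul_pow, inv_mul_cancel₀ hX, one_pow]
  linear_combination RatFunc.X ^ k * hp2 - aeval (RatFunc.X : RatFunc ℂ)⁻¹ h.num * hyy

theorem odd_laurent_is_x_sub_inv_times_poly (h : RatFunc ℂ)
    (hL : IsLaurent h)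
    (hodd : rcomp h (RatFunc.X)⁻¹ = -h)
    (h1 : RatFunc.eval (RingHom.id ℂ) 1 h = 0)
    (hm1 : RatFunc.eval (RingHom.id ℂ) (-1) h = 0) :
    ∃ q : Polynomial ℂ,
      h / ((RatFunc.X : RatFunc ℂ) - (RatFunc.X : RatFunc ℂ)⁻¹)
        = Polynomial.aeval ((RatFunc.X : RatFunc ℂ) + (RatFunc.X : RatFunc ℂ)⁻¹) q := by
  obtain ⟨p, k, rfl⟩ := hL
  rw [rcomp_aux] at hodd
  have hX : (RatFunc.X : RatFunc ℂ) ≠ 0 := RatFunc.X_ne_zero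
  obtain ⟨q, hq⟩ := poly_aux (RatFunc.X : RatFunc ℂ) hX k p
  have hpX : aeval (RatFunc.X : RatFunc ℂ) p = algebraMap (Polynomial ℂ) (RatFunc ℂ) p := by
    rw [← RatFunc.algebraMap_X, aeval_algebraMap_apply, aeval_X_left_apply]
  have hne : (RatFunc.X : RatFunc ℂ) - (RatFunc.X : RatFunc ℂ)⁻¹ ≠ 0 := by
    intro h0
    have h2 : (RatFunc.X : RatFunc ℂ) ^ 2 = 1 := by
      have := mul_inv_cancel₀ hX
      linear_combination RatFunc.X * h0 + this
    have h3 : (Polynomial.X : Polynomial ℂ) ^ 2 = 1 := by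
      apply RatFunc.algebraMap_injective ℂ
      rw [map_pow, RatFunc.algebraMap_X, h2, map_one]
    have h4 := congrArg (Polynomial.eval 0) h3
    simp at h4
  refine ⟨Polynomial.C (1 / 2) * q, ?_⟩
  have hc : algebraMap ℂ (RatFunc ℂ) (1 / 2) * 2 = 1 := by
    rw [← map_ofNat (algebraMap ℂ (RatFunc ℂ)) 2, ← map_mul]
    norm_num
  rw [div_eq_iff hne, map_mul, aeval_C]
  rw [hodd, hpX, inv_pow, ← div_eq_mul_inv] at hq
  linear_combination algebraMap ℂ (RatFunc ℂ) (1 / 2) * hq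
    - algebraMap (Polynomial ℂ) (RatFunc ℂ) p / RatFunc.X ^ k * hc
end
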